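/- Let H be a real Hilbert space of functions on a set X with reproducing kernel k, let μ and ν be probability measures on X for which the feature map x ↦ k(x,·) is Bochner integrable, and suppose every f ∈ H is integrable with respect to μ and ν. Then the maximum mean discrepancy satisfies MMD(μ, ν) = ‖∫ k(x,·) μ(dx) − ∫ k(x,·) ν(dx)‖_H, i.e., the supremum over the unit ball of H of |∫ f dμ − ∫ f dν| equals the norm of the difference of the kernel mean embeddings of μ and ν. -/

import Mathlib

open MeasureTheory
open scoped RealInnerProductSpace

/-! Integrating the reproducing property shows that the difference of the mean embeddings is the
Riesz representative of the functional `f ↦ ∫ f dμ - ∫ f dν`. The maximum mean discrepancy is the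
operator norm of this functional, hence the norm of its representative. -/

section OperatorNorm

variable {𝕜 𝕜₂ E F : Type*} [DenselyNormedField 𝕜] [NontriviallyNormedField 𝕜₂]
  {σ : 𝕜 →+* 𝕜₂} [RingHomIsometric σ]
  [NormedAddCommGroup E] [NormedSpace 𝕜 E] [SeminormedAddCommGroup F] [NormedSpace 𝕜₂ F]

theorem iSup_norm_le_one_norm_apply_eq_norm (T : E →SL[σ] F) :
    ⨆ f : {g : E // ‖g‖ ≤ 1}, ‖T f‖ = ‖T‖ := by
  have hball : Metric.closedBall (0 : E) 1 = {g | ‖g‖ ≤ 1} :=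
    Set.ext fun _ => mem_closedBall_zero_iff
  rw [← T.sSup_unitClosedBall_eq_norm, hball, sSup_image']
  rfl

end OperatorNorm

section InnerProduct

variable {𝕜 H : Type*} [RCLike 𝕜] [NormedAddCommGroup H] [InnerProductSpace 𝕜 H]

theorem iSup_norm_le_one_norm_inner_eq_norm (d : H) :
    ⨆ f : {g : H // ‖g‖ ≤ 1}, ‖inner 𝕜 d f‖ = ‖d‖ :=
  (iSup_norm_le_one_norm_apply_eq_norm (innerSL 𝕜 d)).trans (innerSL_apply_norm 𝕜 d)

end InnerProduct

section Definitions

variable {X H G : Type*} [MeasurableSpace X]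

/-- The mean embedding of `μ` under a feature map `φ`, which for an RKHS is `x ↦ k(x, ·)`. As a
Bochner integral it takes the junk value `0` when `φ` is not `μ`-integrable. -/
noncomputable def meanEmbedding [NormedAddCommGroup H] [NormedSpace ℝ H]
    (φ : X → H) (μ : Measure X) : H :=
  ∫ x, φ x ∂μ

/-- The maximum mean discrepancy of `μ` and `ν` over the unit ball of `H`, whose elements are
regarded as functions on `X` through the evaluation map `ev`. The supremum is taken in `ℝ`, so it
is `0` when the discrepancies are unbounded. -/
noncomputable def mmd [Norm H] [NormedAddCommGroup G] [NormedSpace ℝ G]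
    (ev : H → X → G) (μ ν : Measure X) : ℝ :=
  ⨆ f : {g : H // ‖g‖ ≤ 1}, ‖(∫ x, ev f.1 x ∂μ) - ∫ x, ev f.1 x ∂ν‖

end Definitions

section Reproducing

variable {𝕜 X H : Type*} [RCLike 𝕜] [MeasurableSpace X]
  [NormedAddCommGroup H] [InnerProductSpace 𝕜 H] [NormedSpace ℝ H] [CompleteSpace H]

theorem inner_meanEmbedding {φ : X → H} {μ : Measure X} (hφ : Integrable φ μ) (f : H) :
    inner 𝕜 (meanEmbedding φ μ) f = ∫ x, inner 𝕜 (φ x) f ∂μ := by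
  simp_rw [← inner_conj_symm _ f]
  rw [integral_conj, integral_inner hφ, meanEmbedding]

theorem mmd_eq_norm_sub_meanEmbedding_general (ev : H → X → 𝕜) (φ : X → H)
    (hrepr : ∀ (f : H) (x : X), ev f x = inner 𝕜 (φ x) f)
    (μ ν : Measure X) (hφμ : Integrable φ μ) (hφν : Integrable φ ν) :
    mmd ev μ ν = ‖meanEmbedding φ μ - meanEmbedding φ ν‖ := by
  have hdiff (f : H) : (∫ x, ev f x ∂μ) - ∫ x, ev f x ∂ν
      = inner 𝕜 (meanEmbedding φ μ - meanEmbedding φ ν) f := by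
    simp only [hrepr, inner_sub_left, inner_meanEmbedding hφμ, inner_meanEmbedding hφν]
  simp only [mmd, hdiff, iSup_norm_le_one_norm_inner_eq_norm]

end Reproducing

/-- In an RKHS `H` on `X`, for probability measures `μ`, `ν` with Bochner
integrable feature maps and with every `f ∈ H` integrable, the maximum mean discrepancy
(the supremum over the unit ball of `H` of `|∫ f dμ − ∫ f dν|`) equals the norm of the
difference of the kernel mean embeddings. -/
theorem mmd_eq_norm_sub_meanEmbedding
    {X : Type*} [MeasurableSpace X]
    {H : Type*} [NormedAddCommGroup H] [InnerProductSpace ℝ H] [CompleteSpace H]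
    (ev : H → X → ℝ) (φ : X → H) (k : X → X → ℝ)
    (hk : ∀ x y : X, ev (φ x) y = k x y)
    (hrepr : ∀ (f : H) (x : X), ev f x = ⟪φ x, f⟫)
    (μ ν : Measure X) [IsProbabilityMeasure μ] [IsProbabilityMeasure ν]
    (hφμ : Integrable φ μ) (hφν : Integrable φ ν)
    (hintμ : ∀ f : H, Integrable (ev f) μ)
    (hintν : ∀ f : H, Integrable (ev f) ν) :
    (⨆ f : {g : H // ‖g‖ ≤ 1}, |(∫ x, ev f.1 x ∂μ) - ∫ x, ev f.1 x ∂ν|)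
      = ‖(∫ x, φ x ∂μ) - ∫ x, φ x ∂ν‖ :=
  mmd_eq_norm_sub_meanEmbedding_general ev φ hrepr μ ν hφμ hφν
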